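/- Let 0 < β < π and C₃ > 0. There exists C = C(β, C₃) such that: for every continuously differentiable function H : Π_β → ℂ with |∇H(z)| ≤ C₃ for all z ∈ Π_β, there exists a continuously differentiable function H₀ : Π_β → ℂ with ∂̄H₀ = ∂̄H on Π_β, |H₀(z)| ≤ C and |∇H₀(z)| ≤ C for all z ∈ Π_β. -/

import Mathlib

/-! The function `H₀` is `H - f`, where `f` is an entire function that stays at bounded distance
from `H` on the half-strip and has bounded derivative there. Subtracting a holomorphic function
does not change `∂̄H`.

To construct `f`, restrict `H` to a horizontal half-line, reflect it to an `L`-Lipschitz function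
`h : ℝ → ℂ`, and convolve with the Gaussian: `f z = c⁻¹ ∫ h t * exp (-(z - t)²) dt`, where
`c = ∫ exp (-t²) dt`. The kernel is entire in `z`, so `f` is entire (`differentiable_gaussConv`).
Since `∫ exp (-(z - t)²) dt = c` for every complex `z`,
`f z - h (re z) = c⁻¹ ∫ (h t - h (re z)) * exp (-(z - t)²) dt`, and this is bounded by
`L * exp ((im z)²) * |c⁻¹| * ∫ |s| * exp (-s²) ds` because `|exp (-(z - t)²)|` equals
`exp ((im z)²) * exp (-(t - re z)²)` (`norm_gaussConv_sub_le`). So `f` is close to `h (re z)`, hence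
to `H`, on every horizontal strip; applied on the disc of radius one around `z`, this and Cauchy's
estimate bound `f'`. -/


/-- The half-strip `Π_β = {x + iy : x > 0, |y| < β/2}`. -/
def halfStrip (β : ℝ) : Set ℂ := {z : ℂ | 0 < z.re ∧ |z.im| < β / 2}

/-- The Wirtinger derivative `∂̄G = (∂G/∂x + i ∂G/∂y)/2`. -/
noncomputable def dbar (G : ℂ → ℂ) (z : ℂ) : ℂ :=
  (fderiv ℝ G z 1 + Complex.I * fderiv ℝ G z Complex.I) / 2

open MeasureTheory Set

/-- The total mass `∫ exp (-t²) dt = √π` of the Gaussian, as a complex number. -/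
noncomputable def gaussMass : ℂ := ((Real.pi : ℂ) / 1) ^ (1 / 2 : ℂ)

/-- The convolution of `h : ℝ → ℂ` with the normalised Gaussian, extended to complex arguments. -/
noncomputable def gaussConv (h : ℝ → ℂ) (z : ℂ) : ℂ :=
  gaussMass⁻¹ * ∫ t : ℝ, h t * Complex.exp (-(z - t) ^ 2)

/-- The first absolute moment of the Gaussian, which controls the distance from a Lipschitz
function to its Gaussian convolution. -/
noncomputable def gaussMoment : ℝ := ∫ s : ℝ, |s| * Real.exp (-s ^ 2)

lemma gaussMass_ne_zero : gaussMass ≠ 0 := by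
  unfold gaussMass
  rw [Ne, Complex.cpow_eq_zero_iff]
  simp [Real.pi_ne_zero]

lemma norm_cexp_neg_sq (z : ℂ) (t : ℝ) :
    ‖Complex.exp (-(z - t) ^ 2)‖ = Real.exp (z.im ^ 2) * Real.exp (-(t - z.re) ^ 2) := by
  rw [Complex.norm_exp, ← Real.exp_add]
  congr 1
  simp [pow_two]
  ring

lemma gaussMoment_nonneg : 0 ≤ gaussMoment :=
  integral_nonneg fun s => by positivity

lemma integrable_abs_mul_exp : Integrable fun s : ℝ => |s| * Real.exp (-s ^ 2) := by
  have := (integrable_mul_exp_neg_mul_sq (b := 1) one_pos).norm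
  simpa [abs_mul] using this

lemma integral_cexp_shift (z : ℂ) :
    ∫ t : ℝ, Complex.exp (-(z - t) ^ 2) = gaussMass := by
  have h1 := integral_cexp_quadratic (b := -1) (by simp) (2 * z) (-z ^ 2)
  have : ∀ t : ℝ, Complex.exp (-(z - t) ^ 2)
      = Complex.exp (-1 * (t : ℂ) ^ 2 + 2 * z * t + -z ^ 2) := by
    intro t; congr 1; ring
  simp_rw [this, h1]
  have h0 : (-z ^ 2 - (2 * z) ^ 2 / (4 * -1) : ℂ) = 0 := by ring
  rw [h0]
  simp [gaussMass]

lemma integrable_cexp_shift (z : ℂ) :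
    Integrable fun t : ℝ => Complex.exp (-(z - t) ^ 2) := by
  have h1 := (integrable_exp_neg_mul_sq (b := 1) one_pos).comp_sub_right z.re
  refine (h1.const_mul (Real.exp (z.im ^ 2))).mono' (by fun_prop) (Filter.Eventually.of_forall ?_)
  intro t
  rw [norm_cexp_neg_sq]
  simp

lemma continuous_of_lip {L : ℝ} {h : ℝ → ℂ} (hL : ∀ s t, ‖h s - h t‖ ≤ L * |s - t|) :
    Continuous h := by
  have : LipschitzWith L.toNNReal h := LipschitzWith.of_dist_le_mul fun s t => by
    rw [dist_eq_norm, Real.dist_eq]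
    exact (hL s t).trans (by gcongr; exact Real.le_coe_toNNReal L)
  exact this.continuous

/-- The key bound: since `|h t - h (re z)| ≤ L * |t - re z|`, the integrand is dominated by a
translate of `|s| * exp (-s²)`, so the bound depends on `z` only through `im z`. -/
lemma integrable_lip_sub {L : ℝ} {h : ℝ → ℂ} (hL : ∀ s t, ‖h s - h t‖ ≤ L * |s - t|)
    (z : ℂ) : Integrable (fun t : ℝ => (h t - h z.re) * Complex.exp (-(z - t) ^ 2)) ∧
      ‖∫ t : ℝ, (h t - h z.re) * Complex.exp (-(z - t) ^ 2)‖
        ≤ L * Real.exp (z.im ^ 2) * gaussMoment := by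
  have hc := continuous_of_lip hL
  have hi := (integrable_abs_mul_exp.comp_sub_right z.re).const_mul (L * Real.exp (z.im ^ 2))
  have hb : ∀ t : ℝ, ‖(h t - h z.re) * Complex.exp (-(z - t) ^ 2)‖ ≤
      L * Real.exp (z.im ^ 2) * (|t - z.re| * Real.exp (-(t - z.re) ^ 2)) := by
    intro t
    rw [norm_mul, norm_cexp_neg_sq]
    calc _ ≤ (L * |t - z.re|) * (Real.exp (z.im ^ 2) * Real.exp (-(t - z.re) ^ 2)) := by
          gcongr; exact hL _ _
      _ = _ := by ring
  refine ⟨hi.mono' (by fun_prop) (Filter.Eventually.of_forall hb), ?_⟩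
  refine (norm_integral_le_of_norm_le hi (Filter.Eventually.of_forall hb)).trans_eq ?_
  rw [integral_const_mul, integral_sub_right_eq_self
    (fun s : ℝ => |s| * Real.exp (-s ^ 2)) z.re, gaussMoment]

lemma integrable_lip_mul {L : ℝ} {h : ℝ → ℂ} (hL : ∀ s t, ‖h s - h t‖ ≤ L * |s - t|)
    (z : ℂ) : Integrable fun t : ℝ => h t * Complex.exp (-(z - t) ^ 2) := by
  refine ((integrable_lip_sub hL z).1.add ((integrable_cexp_shift z).const_mul (h z.re))).congr
    (Filter.Eventually.of_forall fun t => ?_)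
  simp only [Pi.add_apply]
  ring

lemma norm_gaussConv_sub_le {L : ℝ} {h : ℝ → ℂ} (hL : ∀ s t, ‖h s - h t‖ ≤ L * |s - t|)
    (z : ℂ) : ‖gaussConv h z - h z.re‖
      ≤ ‖gaussMass⁻¹‖ * (L * Real.exp (z.im ^ 2) * gaussMoment) := by
  have : gaussConv h z - h z.re
      = gaussMass⁻¹ * ∫ t : ℝ, (h t - h z.re) * Complex.exp (-(z - t) ^ 2) := by
    simp_rw [sub_mul]
    rw [integral_sub (integrable_lip_mul hL z) ((integrable_cexp_shift z).const_mul (h z.re)),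
      integral_const_mul, integral_cexp_shift, gaussConv, mul_sub, mul_comm (h z.re),
      inv_mul_cancel_left₀ gaussMass_ne_zero]
  rw [this, norm_mul]
  gcongr
  exact (integrable_lip_sub hL z).2

/-- An integrable majorant, locally uniform in `z`, of the `z`-derivative of the integrand of
`gaussConv`: completing the square costs half of the Gaussian decay. -/
lemma norm_deriv_integrand_le {L : ℝ} {h : ℝ → ℂ} (hL : ∀ s t, ‖h s - h t‖ ≤ L * |s - t|)
    (hL0 : 0 ≤ L) (z₀ z : ℂ) (hz : z ∈ Metric.ball z₀ 1) (t : ℝ) :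
    ‖h t * (Complex.exp (-(z - t) ^ 2) * (-(2 * (z - t))))‖ ≤
      ((‖h z₀.re‖ + L) * (2 * (2 + (|z₀.im| + 1))) * Real.exp (1 + (|z₀.im| + 1) ^ 2)) *
        (Real.exp (-(1 / 2) * (t - z₀.re) ^ 2) * 2
          + 2 * ((t - z₀.re) ^ (2 : ℝ) * Real.exp (-(1 / 2) * (t - z₀.re) ^ 2))) := by
  rw [Metric.mem_ball, dist_eq_norm] at hz
  have hre : |z.re - z₀.re| ≤ 1 := by
    simpa using (Complex.abs_re_le_norm (z - z₀)).trans hz.le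
  have him : |z.im| ≤ |z₀.im| + 1 := by
    have h1 : |z.im - z₀.im| ≤ 1 := by
      simpa using (Complex.abs_im_le_norm (z - z₀)).trans hz.le
    have := abs_sub_abs_le_abs_sub z.im z₀.im
    linarith
  set q := |z₀.im| + 1 with hq
  have hq0 : 0 ≤ q := by positivity
  set s := t - z₀.re with hs
  have hzt : z.re - t = (z.re - z₀.re) - s := by rw [hs]; ring
  have hh : ‖h t‖ ≤ (‖h z₀.re‖ + L) * (1 + |s|) := by
    have h1 := hL t z₀.re
    have h2 := norm_le_norm_add_norm_sub' (h t) (h z₀.re)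
    have h3 : 0 ≤ ‖h z₀.re‖ * |s| := by positivity
    rw [← hs] at h1
    nlinarith
  have hn : ‖z - t‖ ≤ (2 + q) * (1 + |s|) := by
    have h1 := Complex.norm_le_abs_re_add_abs_im (z - t)
    have h2 : |(z - t).re| ≤ 1 + |s| := by
      simp only [Complex.sub_re, Complex.ofReal_re]
      rw [hzt]
      exact (abs_sub _ _).trans (by linarith)
    have h3 : |(z - t).im| ≤ q := by simpa using him
    have h4 : 0 ≤ q * |s| := by positivity
    nlinarith [abs_nonneg s]
  have he : ‖Complex.exp (-(z - t) ^ 2)‖ ≤ Real.exp (1 + q ^ 2) * Real.exp (-(1 / 2) * s ^ 2) := by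
    rw [norm_cexp_neg_sq, ← Real.exp_add, ← Real.exp_add]
    apply Real.exp_le_exp.2
    have h1 : z.im ^ 2 ≤ q ^ 2 := sq_le_sq.2 (by rwa [abs_of_nonneg hq0])
    have h2 : (z.re - z₀.re) ^ 2 ≤ 1 := by
      rw [← sq_abs]; nlinarith [abs_nonneg (z.re - z₀.re)]
    have h3 : t - z.re = s - (z.re - z₀.re) := by rw [hs]; ring
    rw [h3]
    nlinarith [sq_nonneg (s - 2 * (z.re - z₀.re))]
  have hnn : ‖-(2 * (z - t))‖ ≤ 2 * ((2 + q) * (1 + |s|)) := by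
    rw [norm_neg, norm_mul]; simpa using hn
  rw [norm_mul, norm_mul, Real.rpow_two]
  calc _ ≤ ((‖h z₀.re‖ + L) * (1 + |s|)) *
        ((Real.exp (1 + q ^ 2) * Real.exp (-(1 / 2) * s ^ 2)) * (2 * ((2 + q) * (1 + |s|)))) := by
        gcongr
    _ = ((‖h z₀.re‖ + L) * (2 * (2 + q)) * Real.exp (1 + q ^ 2)) *
        (Real.exp (-(1 / 2) * s ^ 2) * (1 + |s|) ^ 2) := by ring
    _ ≤ ((‖h z₀.re‖ + L) * (2 * (2 + q)) * Real.exp (1 + q ^ 2)) *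
        (Real.exp (-(1 / 2) * s ^ 2) * (2 + 2 * s ^ 2)) := by
        gcongr
        nlinarith [sq_nonneg (1 - |s|), sq_abs s]
    _ = _ := by ring

lemma differentiable_gaussConv {L : ℝ} {h : ℝ → ℂ} (hL : ∀ s t, ‖h s - h t‖ ≤ L * |s - t|)
    (hL0 : 0 ≤ L) : Differentiable ℂ (gaussConv h) := by
  intro z₀
  have hc := continuous_of_lip hL
  have hi0 := (integrable_exp_neg_mul_sq (b := 1 / 2) (by norm_num)).comp_sub_right z₀.re
  have hi2 := (integrable_rpow_mul_exp_neg_mul_sq (b := 1 / 2) (by norm_num)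
    (s := 2) (by norm_num)).comp_sub_right z₀.re
  have key := hasDerivAt_integral_of_dominated_loc_of_deriv_le (μ := volume) (𝕜 := ℂ)
    (F := fun z (t : ℝ) => h t * Complex.exp (-(z - t) ^ 2))
    (F' := fun z (t : ℝ) => h t * (Complex.exp (-(z - t) ^ 2) * (-(2 * (z - t)))))
    (Metric.ball_mem_nhds z₀ one_pos)
    (Filter.Eventually.of_forall fun z => (integrable_lip_mul hL z).aestronglyMeasurable)
    (integrable_lip_mul hL z₀)
    (by fun_prop)
    (Filter.Eventually.of_forall fun t z hz => norm_deriv_integrand_le hL hL0 z₀ z hz t)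
    (((hi0.mul_const 2).add (hi2.const_mul 2)).const_mul _)
    (Filter.Eventually.of_forall fun t z _ => by
      have h1 : HasDerivAt (fun z : ℂ => -(z - t) ^ 2) (-(2 * (z - t))) z := by
        simpa using (((hasDerivAt_id' z).sub_const (t : ℂ)).fun_pow 2).fun_neg
      exact h1.cexp.const_mul (h t))
  exact key.2.differentiableAt.const_mul _

/-- Cauchy's estimate on the disc of radius one: the distance from `gaussConv h w` to the constant
`h (re z)` is bounded there by `norm_gaussConv_sub_le` plus the oscillation of `h`. -/
lemma norm_deriv_gaussConv_le {L : ℝ} {h : ℝ → ℂ} (hL : ∀ s t, ‖h s - h t‖ ≤ L * |s - t|)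
    (hL0 : 0 ≤ L) {b : ℝ} (z : ℂ) (hz : |z.im| ≤ b) : ‖deriv (gaussConv h) z‖
      ≤ ‖gaussMass⁻¹‖ * (L * Real.exp ((b + 1) ^ 2) * gaussMoment) + L := by
  have hd := differentiable_gaussConv hL hL0
  have hb0 : 0 ≤ b := (abs_nonneg _).trans hz
  have := Complex.norm_deriv_le_of_forall_mem_sphere_norm_le (c := z) (R := 1)
    (f := fun w => gaussConv h w - h z.re)
    (C := ‖gaussMass⁻¹‖ * (L * Real.exp ((b + 1) ^ 2) * gaussMoment) + L) one_pos
    (hd.sub_const _).diffContOnCl ?_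
  · simpa [deriv_sub_const] using this
  intro w hw
  rw [mem_sphere_iff_norm] at hw
  have hre : |w.re - z.re| ≤ 1 := by
    simpa using (Complex.abs_re_le_norm (w - z)).trans hw.le
  have him : |w.im| ≤ b + 1 := by
    have h1 : |w.im - z.im| ≤ 1 := by
      simpa using (Complex.abs_im_le_norm (w - z)).trans hw.le
    have := abs_sub_abs_le_abs_sub w.im z.im
    linarith
  have h1 : w.im ^ 2 ≤ (b + 1) ^ 2 := sq_le_sq.2 (by rwa [abs_of_nonneg (by linarith : 0 ≤ b + 1)])
  have hm := gaussMoment_nonneg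
  calc ‖gaussConv h w - h z.re‖ ≤ ‖gaussConv h w - h w.re‖ + ‖h w.re - h z.re‖ :=
        norm_sub_le_norm_sub_add_norm_sub _ _ _
    _ ≤ ‖gaussMass⁻¹‖ * (L * Real.exp (w.im ^ 2) * gaussMoment) + L * |w.re - z.re| :=
        add_le_add (norm_gaussConv_sub_le hL w) (hL _ _)
    _ ≤ _ := by
        gcongr
        nlinarith

lemma isOpen_halfStrip (β : ℝ) : IsOpen (halfStrip β) :=
  (isOpen_lt continuous_const Complex.continuous_re).inter
    (isOpen_lt (continuous_abs.comp Complex.continuous_im) continuous_const)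

lemma convex_halfStrip (β : ℝ) : Convex ℝ (halfStrip β) := by
  have : halfStrip β = Complex.reLm ⁻¹' Ioi 0 ∩ Complex.imLm ⁻¹' Ioo (-(β / 2)) (β / 2) := by
    ext z
    simp [halfStrip, abs_lt]
  rw [this]
  exact ((convex_Ioi 0).linear_preimage _).inter ((convex_Ioo _ _).linear_preimage _)

/-- A Lipschitz function `H` on the half-strip `Π_β` can be modified, without changing
`∂̄H`, to a function `H₀` that is in addition uniformly bounded. -/
theorem modify_to_bounded (β C₃ : ℝ) (hβ0 : 0 < β) (hβ : β < Real.pi) (hC₃ : 0 < C₃) :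
    ∃ C : ℝ, ∀ H : ℂ → ℂ, ContDiffOn ℝ 1 H (halfStrip β) →
      (∀ z ∈ halfStrip β, ‖fderiv ℝ H z‖ ≤ C₃) →
      ∃ H₀ : ℂ → ℂ, ContDiffOn ℝ 1 H₀ (halfStrip β) ∧
        (∀ z ∈ halfStrip β, dbar H₀ z = dbar H z) ∧
        ∀ z ∈ halfStrip β, ‖H₀ z‖ ≤ C ∧ ‖fderiv ℝ H₀ z‖ ≤ C := by
  set M := ‖gaussMass⁻¹‖ * (C₃ * Real.exp ((β / 2 + 1) ^ 2) * gaussMoment) with hM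
  have hM0 : 0 ≤ M := by
    have := gaussMoment_nonneg
    positivity
  refine ⟨C₃ * (2 + β) + M, fun H hH hH' => ?_⟩
  have hopen := isOpen_halfStrip β
  have hdiff : ∀ z ∈ halfStrip β, DifferentiableAt ℝ H z := fun z hz =>
    (hH.differentiableOn one_ne_zero).differentiableAt (hopen.mem_nhds hz)
  have hlip : ∀ z ∈ halfStrip β, ∀ w ∈ halfStrip β, ‖H z - H w‖ ≤ C₃ * ‖z - w‖ :=
    fun z hz w hw => (convex_halfStrip β).norm_image_sub_le_of_norm_fderiv_le hdiff hH' hw hz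
  have hmem : ∀ x : ℝ, 0 < x → (x : ℂ) ∈ halfStrip β := fun x hx => by
    simp [halfStrip, hx, hβ0]
  -- The shift by one keeps the half-line inside the open half-strip at `t = 0`.
  set h : ℝ → ℂ := fun t => H ((|t| + 1 : ℝ) : ℂ) with hh
  have hL : ∀ s t, ‖h s - h t‖ ≤ C₃ * |s - t| := fun s t => by
    refine (hlip _ (hmem _ (by positivity)) _ (hmem _ (by positivity))).trans ?_
    rw [← Complex.ofReal_sub, Complex.norm_real, Real.norm_eq_abs]
    refine mul_le_mul_of_nonneg_left ?_ hC₃.le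
    simpa using abs_abs_sub_abs_le_abs_sub s t
  set f := gaussConv h with hf
  have hfd : Differentiable ℂ f := differentiable_gaussConv hL hC₃.le
  have hfR : ∀ z, fderiv ℝ f z = (fderiv ℂ f z).restrictScalars ℝ := fun z =>
    (hfd z).fderiv_restrictScalars ℝ
  have hfdR : Differentiable ℝ f := hfd.restrictScalars ℝ
  have hsub : ∀ z ∈ halfStrip β, fderiv ℝ (fun z => H z - f z) z = fderiv ℝ H z - fderiv ℝ f z :=
    fun z hz => fderiv_fun_sub (hdiff z hz) (hfdR z)
  refine ⟨fun z => H z - f z, ?_, fun z hz => ?_, fun z hz => ⟨?_, ?_⟩⟩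
  · exact hH.sub ((hfd.contDiff (n := 1)).restrict_scalars ℝ).contDiffOn
  · have h1 : fderiv ℂ f z Complex.I = Complex.I * fderiv ℂ f z 1 := by
      simpa only [smul_eq_mul, mul_one] using (fderiv ℂ f z).map_smul Complex.I 1
    simp only [dbar, hsub z hz, hfR, sub_apply,
      ContinuousLinearMap.coe_restrictScalars', h1]
    linear_combination (-(fderiv ℂ f z 1) / 2) * Complex.I_sq
  · have hz' := hz
    obtain ⟨hx, hy⟩ := hz'
    have h1 : ‖H z - h z.re‖ ≤ C₃ * (1 + β / 2) := by
      refine (hlip z hz _ (hmem _ (by positivity))).trans ?_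
      gcongr
      refine (Complex.norm_le_abs_re_add_abs_im _).trans ?_
      simp [abs_of_pos hx]
      linarith
    have h2 : ‖f z - h z.re‖ ≤ M := by
      refine (norm_gaussConv_sub_le hL z).trans ?_
      have := gaussMoment_nonneg
      have h3 : z.im ^ 2 ≤ (β / 2 + 1) ^ 2 :=
        sq_le_sq.2 (by rw [abs_of_pos (by linarith : 0 < β / 2 + 1)]; linarith)
      rw [hM]
      gcongr
    have h3 := norm_sub_le_norm_sub_add_norm_sub (H z) (h z.re) (f z)
    rw [norm_sub_rev (h z.re)] at h3
    nlinarith [mul_pos hC₃ hβ0]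
  · rw [hsub z hz]
    have h1 : ‖fderiv ℝ f z‖ ≤ M + C₃ := by
      rw [hfR, ContinuousLinearMap.norm_restrictScalars, ← norm_deriv_eq_norm_fderiv]
      exact norm_deriv_gaussConv_le hL hC₃.le z hz.2.le
    have h2 := norm_sub_le (fderiv ℝ H z) (fderiv ℝ f z)
    nlinarith [hH' z hz, mul_pos hC₃ hβ0]
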